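/- arXiv:1703.10283 — 4 statements merged into one kernel-verified Lean document; each statement's English description precedes it below -/
import Mathlib

section
/- Let g : ℝ → (0,∞) be a strictly positive probability density. Let U and V be random vectors in ℝ^k defined on a common probability space, with joint characteristic function φ_{U,V}(s,t) = E[exp(i(⟨s,U⟩ + ⟨t,V⟩))] and marginal characteristic functions φ_U(s) = E[exp(i⟨s,U⟩)], φ_V(t) = E[exp(i⟨t,V⟩)]. Then ∫_{ℝ^k}∫_{ℝ^k} |φ_{U,V}(s,t) − φ_U(s)φ_V(t)|² ∏_{j=1}^k g(s_j)g(t_j) ds dt = 0 if and only if U and V are independent. -/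
open MeasureTheory

open ProbabilityTheory in
theorem indep_iff_cf {Ω : Type*} [MeasurableSpace Ω] (P : Measure Ω) [IsProbabilityMeasure P]
    {k : ℕ} (U V : Ω → (Fin k → ℝ)) (hU : Measurable U) (hV : Measurable V) :
    Measure.map (fun ω => (U ω, V ω)) P = (Measure.map U P).prod (Measure.map V P) ↔
    ∀ s t : Fin k → ℝ, (∫ ω, Complex.exp (Complex.I *
                ((∑ j, (s j * U ω j + t j * V ω j) : ℝ) : ℂ)) ∂P) =
              (∫ ω, Complex.exp (Complex.I * ((∑ j, s j * U ω j : ℝ) : ℂ)) ∂P) *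
              (∫ ω, Complex.exp (Complex.I * ((∑ j, t j * V ω j : ℝ) : ℂ)) ∂P) := by
  rw [← indepFun_iff_map_prod_eq_prod_map_map hU.aemeasurable hV.aemeasurable,
    indepFun_iff_charFunDual_prod hU.aemeasurable hV.aemeasurable]
  have key : ∀ (L : StrongDual ℝ ((Fin k → ℝ) × (Fin k → ℝ))) (s t : Fin k → ℝ),
      (∀ u v, L (u, v) = ∑ j, (s j * u j + t j * v j)) →
      ((charFunDual (P.map (fun ω ↦ (U ω, V ω))) L =
      charFunDual (P.map U) (L.comp (.inl ℝ _ _)) * charFunDual (P.map V) (L.comp (.inr ℝ _ _))) ↔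
      (∫ ω, Complex.exp (Complex.I *
                ((∑ j, (s j * U ω j + t j * V ω j) : ℝ) : ℂ)) ∂P) =
              (∫ ω, Complex.exp (Complex.I * ((∑ j, s j * U ω j : ℝ) : ℂ)) ∂P) *
              (∫ ω, Complex.exp (Complex.I * ((∑ j, t j * V ω j : ℝ) : ℂ)) ∂P)) := by
    intro L s t h
    rw [charFunDual_apply, charFunDual_apply, charFunDual_apply,
      integral_map (by fun_prop) (by fun_prop), integral_map (by fun_prop) (by fun_prop),
      integral_map (by fun_prop) (by fun_prop)]
    simp only [ContinuousLinearMap.comp_apply, ContinuousLinearMap.inl_apply,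
      ContinuousLinearMap.inr_apply, h, Pi.zero_apply, mul_zero, add_zero, zero_add,
      mul_comm Complex.I]
  constructor
  · intro H s t
    let L : StrongDual ℝ ((Fin k → ℝ) × (Fin k → ℝ)) :=
      ∑ j, (s j • (ContinuousLinearMap.proj j).comp (.fst ℝ _ _) +
        t j • (ContinuousLinearMap.proj j).comp (.snd ℝ _ _))
    refine (key L s t ?_).1 (H L)
    intro u v
    simp [L]
  · intro H L
    refine (key L (fun j => L (Pi.single j 1, 0)) (fun j => L (0, Pi.single j 1)) ?_).2 (H _ _)
    intro u v
    have h1 : (u, v) = ∑ j, (u j • ((Pi.single j 1, 0) : (Fin k → ℝ) × (Fin k → ℝ))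
        + v j • ((0, Pi.single j 1) : (Fin k → ℝ) × (Fin k → ℝ))) := by
      ext i
      · simp [Prod.fst_sum, Finset.sum_apply, Pi.single_apply]
      · simp [Prod.snd_sum, Finset.sum_apply, Pi.single_apply]
    rw [h1, map_sum]
    simp only [map_add, map_smul, smul_eq_mul]
    exact Finset.sum_congr rfl fun j _ => by ring

theorem cont_cf {Ω X : Type*} [MeasurableSpace Ω] (ℙ : Measure Ω) [IsProbabilityMeasure ℙ]
    [TopologicalSpace X] [FirstCountableTopology X]
    (f : X → Ω → ℝ) (h1 : ∀ x, Measurable (f x)) (h2 : ∀ ω, Continuous fun x => f x ω) :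
    Continuous fun x => ∫ ω, Complex.exp (Complex.I * (f x ω : ℂ)) ∂ℙ := by
  refine continuous_of_dominated (bound := fun _ => 1) ?_ ?_ (integrable_const _) ?_
  · intro x
    have := h1 x
    exact (by fun_prop : Measurable _).aestronglyMeasurable
  · intro x
    refine Filter.Eventually.of_forall fun ω => ?_
    rw [mul_comm, Complex.norm_exp_ofReal_mul_I]
  · refine Filter.Eventually.of_forall fun ω => ?_
    have := h2 ω
    fun_prop



/-- For a strictly positive probability density `g` on `ℝ` and random
vectors `U, V : Ω → ℝ^k` on a common probability space, the weighted squared distance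
between the joint characteristic function and the product of the marginal characteristic
functions vanishes iff `U` and `V` are independent (joint law = product of marginal laws). -/
theorem distance_covariance_zero_iff_indep
    {Ω : Type*} [MeasurableSpace Ω] (ℙ : Measure Ω) [IsProbabilityMeasure ℙ]
    {k : ℕ} (hk : 1 ≤ k) (U V : Ω → (Fin k → ℝ))
    (hU : Measurable U) (hV : Measurable V)
    (g : ℝ → ℝ) (hg : Measurable g) (hg_pos : ∀ s, 0 < g s)
    (hg_int : (∫ s, g s) = 1) :
    (∫⁻ (s : Fin k → ℝ), ∫⁻ (t : Fin k → ℝ),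
        ENNReal.ofReal
          (‖(∫ ω, Complex.exp (Complex.I *
                ((∑ j, (s j * U ω j + t j * V ω j) : ℝ) : ℂ)) ∂ℙ) -
              (∫ ω, Complex.exp (Complex.I * ((∑ j, s j * U ω j : ℝ) : ℂ)) ∂ℙ) *
              (∫ ω, Complex.exp (Complex.I * ((∑ j, t j * V ω j : ℝ) : ℂ)) ∂ℙ)‖ ^ 2 *
            ∏ j, g (s j) * g (t j))) = 0
      ↔ Measure.map (fun ω => (U ω, V ω)) ℙ
          = (Measure.map U ℙ).prod (Measure.map V ℙ) := by
  rw [indep_iff_cf ℙ U V hU hV]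
  constructor
  · intro H
    let D : (Fin k → ℝ) × (Fin k → ℝ) → ℂ := fun p =>
      (∫ ω, Complex.exp (Complex.I *
                ((∑ j, (p.1 j * U ω j + p.2 j * V ω j) : ℝ) : ℂ)) ∂ℙ) -
              (∫ ω, Complex.exp (Complex.I * ((∑ j, p.1 j * U ω j : ℝ) : ℂ)) ∂ℙ) *
              (∫ ω, Complex.exp (Complex.I * ((∑ j, p.2 j * V ω j : ℝ) : ℂ)) ∂ℙ)
    have hD : Continuous D := by
      refine Continuous.sub ?_ (Continuous.mul ?_ ?_)
      · exact cont_cf ℙ (fun (p : (Fin k → ℝ) × (Fin k → ℝ)) ω =>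
          ∑ j, (p.1 j * U ω j + p.2 j * V ω j)) (fun _ => by fun_prop) (fun _ => by fun_prop)
      · exact cont_cf ℙ (fun (p : (Fin k → ℝ) × (Fin k → ℝ)) ω =>
          ∑ j, p.1 j * U ω j) (fun _ => by fun_prop) (fun _ => by fun_prop)
      · exact cont_cf ℙ (fun (p : (Fin k → ℝ) × (Fin k → ℝ)) ω =>
          ∑ j, p.2 j * V ω j) (fun _ => by fun_prop) (fun _ => by fun_prop)
    have hDm : Measurable D := hD.measurable
    let F : (Fin k → ℝ) × (Fin k → ℝ) → ENNReal := fun p =>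
      ENNReal.ofReal (‖D p‖ ^ 2 * ∏ j, g (p.1 j) * g (p.2 j))
    have hF : Measurable F := by fun_prop
    have H2 : ∫⁻ p, F p = 0 := by
      rw [Measure.volume_eq_prod, lintegral_prod _ hF.aemeasurable]
      exact H
    rw [lintegral_eq_zero_iff hF] at H2
    have H3 : D =ᵐ[volume] (fun _ => 0) := by
      filter_upwards [H2] with p hp
      have hpos : 0 < ∏ j, g (p.1 j) * g (p.2 j) :=
        Finset.prod_pos fun j _ => mul_pos (hg_pos _) (hg_pos _)
      have h4 : ‖D p‖ ^ 2 * ∏ j, g (p.1 j) * g (p.2 j) ≤ 0 := ENNReal.ofReal_eq_zero.1 hp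
      by_contra hne
      have : 0 < ‖D p‖ ^ 2 := pow_pos (norm_pos_iff.2 hne) 2
      exact absurd h4 (not_le.2 (mul_pos this hpos))
    have H4 := Continuous.ae_eq_iff_eq volume hD continuous_const |>.1 H3
    intro s t
    exact sub_eq_zero.1 (congrFun H4 (s, t))
  · intro H
    simp [-Complex.ofReal_sum, H]
end

section
/- Let g : ℝ → (0,∞) be a strictly positive probability density. Then d_g(X,Y) = 0 if and only if the joint law of (X,Y) on C([0,1],ℝ) × C([0,1],ℝ) equals the product of the law of X and the law of Y, i.e., if and only if X and Y are independent. -/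
open MeasureTheory
open scoped unitInterval ENNReal

/-- The joint characteristic function of the finite-dimensional distribution of the pair
of processes `(X, Y)` at the points `x 0, …, x (k-1)` of `[0,1]`:
`φ_{X,Y}(x; s, t) = E[exp(i Σ_j (s_j X(x_j) + t_j Y(x_j)))]`. -/
noncomputable def jointCF {Ω : Type*} [MeasurableSpace Ω] (ℙ : Measure Ω)
    (X Y : Ω → C(I, ℝ)) {k : ℕ} (x : Fin k → I) (s t : Fin k → ℝ) : ℂ :=
  ∫ ω, Complex.exp (Complex.I * ((∑ j, (s j * X ω (x j) + t j * Y ω (x j)) : ℝ) : ℂ)) ∂ℙ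

/-- The characteristic function of the finite-dimensional distribution of the process `X`
at the points `x 0, …, x (k-1)` of `[0,1]`: `φ_X(x; s) = E[exp(i Σ_j s_j X(x_j))]`. -/
noncomputable def margCF {Ω : Type*} [MeasurableSpace Ω] (ℙ : Measure Ω)
    (X : Ω → C(I, ℝ)) {k : ℕ} (x : Fin k → I) (s : Fin k → ℝ) : ℂ :=
  ∫ ω, Complex.exp (Complex.I * ((∑ j, s j * X ω (x j) : ℝ) : ℂ)) ∂ℙ

/-- The distance covariance `d_g(X,Y)` of two stochastic processes `X, Y` with continuous
sample paths on `[0,1]`, with weight function `g`: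
`d_g(X,Y) = Σ_{k≥1} (e^{-1}/k!) ∫_{[0,1]^k} ∫_{ℝ^{2k}} |φ_{X,Y} - φ_X φ_Y|² Π_j g(s_j)g(t_j) ds dt dx`. -/
noncomputable def distCov {Ω : Type*} [MeasurableSpace Ω] (ℙ : Measure Ω)
    (X Y : Ω → C(I, ℝ)) (g : ℝ → ℝ) : ℝ≥0∞ :=
  ∑' k : ℕ,
    ENNReal.ofReal (Real.exp (-1) / (Nat.factorial (k + 1) : ℝ)) *
      ∫⁻ (x : Fin (k + 1) → I),
        ∫⁻ (s : Fin (k + 1) → ℝ), ∫⁻ (t : Fin (k + 1) → ℝ),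
          ENNReal.ofReal
            (‖jointCF ℙ X Y x s t - margCF ℙ X x s * margCF ℙ Y x t‖ ^ 2 *
              ∏ j, g (s j) * g (t j))

open ProbabilityTheory (IndepFun indepFun_iff_charFunDual_prod IndepFun_iff_Indep indepFun_iff_map_prod_eq_prod_map_map)

instance volume_I_isOpenPos_aux : (volume : Measure I).IsOpenPosMeasure := by
  refine ⟨fun U hU hne h0 => ?_⟩
  obtain ⟨V, hV, rfl⟩ := isOpen_induced_iff.1 hU
  obtain ⟨x, hx⟩ := hne
  rw [unitInterval.volume_apply, Subtype.image_preimage_coe] at h0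
  have hx1 : (x : ℝ) ∈ closure (Set.Ioo (0 : ℝ) 1) := by
    rw [closure_Ioo zero_ne_one]; exact x.2
  obtain ⟨y, hyV, hyI⟩ := mem_closure_iff.1 hx1 V hV hx
  have hpos : 0 < volume (V ∩ Set.Ioo (0 : ℝ) 1) :=
    (hV.inter isOpen_Ioo).measure_pos volume ⟨y, hyV, hyI⟩
  refine absurd (measure_mono_null ?_ h0) hpos.ne'
  rintro z ⟨hz, hz'⟩
  exact ⟨⟨hz'.1.le, hz'.2.le⟩, hz⟩

lemma meas_eval_aux {Ω : Type*} [MeasurableSpace Ω]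
    [MeasurableSpace C(I, ℝ)] [BorelSpace C(I, ℝ)]
    {X : Ω → C(I, ℝ)} (hX : Measurable X) (x : I) : Measurable (fun ω => X ω x) :=
  (continuous_eval_const x).measurable.comp hX

/-- Continuity of characteristic functions in all variables. -/
lemma cont_joint_aux {Ω : Type*} [MeasurableSpace Ω] (ℙ : Measure Ω) [IsProbabilityMeasure ℙ]
    [MeasurableSpace C(I, ℝ)] [BorelSpace C(I, ℝ)]
    (X Y : Ω → C(I, ℝ)) (hX : Measurable X) (hY : Measurable Y) (k : ℕ) :
    Continuous (fun p : (Fin k → I) × (Fin k → ℝ) × (Fin k → ℝ) =>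
      jointCF ℙ X Y p.1 p.2.1 p.2.2) := by
  unfold jointCF
  refine continuous_of_dominated (bound := fun _ => 1) (fun p => ?_) (fun p => ?_)
    (integrable_const _) ?_
  · have h1 := fun j => meas_eval_aux hX (p.1 j)
    have h2 := fun j => meas_eval_aux hY (p.1 j)
    exact Measurable.aestronglyMeasurable (by fun_prop)
  · refine Filter.Eventually.of_forall fun ω => ?_
    rw [mul_comm, Complex.norm_exp_ofReal_mul_I]
  · exact Filter.Eventually.of_forall fun ω => by fun_prop

lemma marg_eq_left_aux {Ω : Type*} [MeasurableSpace Ω] (ℙ : Measure Ω)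
    (X Y : Ω → C(I, ℝ)) {k : ℕ} (x : Fin k → I) (s : Fin k → ℝ) :
    margCF ℙ X x s = jointCF ℙ X Y x s 0 := by
  simp [margCF, jointCF]

lemma indep_of_cf_aux {Ω : Type*} [MeasurableSpace Ω] (ℙ : Measure Ω) [IsProbabilityMeasure ℙ]
    [MeasurableSpace C(I, ℝ)] [BorelSpace C(I, ℝ)]
    (X Y : Ω → C(I, ℝ)) (hX : Measurable X) (hY : Measurable Y) {k : ℕ} (x : Fin k → I)
    (h : ∀ s t, jointCF ℙ X Y x s t = margCF ℙ X x s * margCF ℙ Y x t) :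
    IndepFun (fun ω j => X ω (x j)) (fun ω j => Y ω (x j)) ℙ := by
  have h1 : Measurable (fun ω j => X ω (x j)) :=
    measurable_pi_lambda _ fun j => meas_eval_aux hX (x j)
  have h2 : Measurable (fun ω j => Y ω (x j)) :=
    measurable_pi_lambda _ fun j => meas_eval_aux hY (x j)
  rw [indepFun_iff_charFunDual_prod h1.aemeasurable h2.aemeasurable]
  intro L
  have key : ∀ (M : StrongDual ℝ (Fin k → ℝ)) (v : Fin k → ℝ),
      M v = ∑ j, M (Pi.single j 1) * v j := by
    intro M v
    refine (LinearMap.pi_apply_eq_sum_univ M.toLinearMap v).trans ?_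
    refine Finset.sum_congr rfl fun j _ => ?_
    rw [smul_eq_mul, mul_comm]
    congr 1
    refine congrArg M ?_
    ext i; simp [Pi.single_apply, eq_comm]
  have hL : ∀ v w, L (v, w) = (L.comp (.inl ℝ _ _)) v + (L.comp (.inr ℝ _ _)) w := by
    intro v w
    simp [← map_add]
  have := h (fun j => (L.comp (.inl ℝ _ _)) (Pi.single j 1))
    (fun j => (L.comp (.inr ℝ _ _)) (Pi.single j 1))
  simp only [jointCF, margCF, Finset.sum_add_distrib, ← key] at this
  simp only [charFunDual_apply]
  rw [integral_map (h1.prodMk h2).aemeasurable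
      (Continuous.aestronglyMeasurable (by fun_prop)),
    integral_map h1.aemeasurable (Continuous.aestronglyMeasurable (by fun_prop)),
    integral_map h2.aemeasurable (Continuous.aestronglyMeasurable (by fun_prop))]
  simp only [hL, mul_comm _ Complex.I]
  exact this

lemma indep_lift_aux {Ω : Type*} [MeasurableSpace Ω] (ℙ : Measure Ω) [IsProbabilityMeasure ℙ]
    [MeasurableSpace C(I, ℝ)] [BorelSpace C(I, ℝ)]
    (X Y : Ω → C(I, ℝ)) (hX : Measurable X) (hY : Measurable Y)
    (h : ∀ (k : ℕ) (x : Fin (k + 1) → I),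
      IndepFun (fun ω j => X ω (x j)) (fun ω j => Y ω (x j)) ℙ) :
    IndepFun X Y ℙ := by
  let d := TopologicalSpace.denseSeq I
  let F : C(I, ℝ) → (ℕ → ℝ) := fun f n => f (d n)
  have hFc : Continuous F := continuous_pi fun n => continuous_eval_const (d n)
  have hFi : Function.Injective F := by
    intro f g hfg
    have : (f : I → ℝ) = g := (TopologicalSpace.denseRange_denseSeq I).equalizer
      f.continuous g.continuous hfg
    exact DFunLike.coe_injective this
  have hF : MeasurableEmbedding F := hFc.measurableEmbedding hFi
  have hproc : IndepFun (F ∘ X) (F ∘ Y) ℙ := by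
    refine ProbabilityTheory.IndepFun.process_indepFun_process (X := fun n ω => X ω (d n))
      (Y := fun n ω => Y ω (d n)) (fun n => meas_eval_aux hX _) (fun n => meas_eval_aux hY _) ?_
    intro S T
    let N := (S ∪ T).sup id
    have hS : ∀ i : S, (i : ℕ) < N + 1 := fun i =>
      Nat.lt_succ_of_le (Finset.le_sup (f := id) (Finset.mem_union_left T i.2))
    have hT : ∀ i : T, (i : ℕ) < N + 1 := fun i =>
      Nat.lt_succ_of_le (Finset.le_sup (f := id) (Finset.mem_union_right S i.2))
    have := (h N (fun j => d j)).comp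
      (φ := fun (v : Fin (N + 1) → ℝ) (i : S) => v ⟨i, hS i⟩)
      (ψ := fun (v : Fin (N + 1) → ℝ) (i : T) => v ⟨i, hT i⟩) (by fun_prop) (by fun_prop)
    exact this
  rw [IndepFun_iff_Indep] at hproc ⊢
  rwa [← MeasurableSpace.comap_comp, ← MeasurableSpace.comap_comp, hF.comap_eq] at hproc

lemma ae_zero_aux {k : ℕ}
    (G : (Fin k → I) × (Fin k → ℝ) × (Fin k → ℝ) → ℝ≥0∞) (hG : Measurable G)
    (h : ∫⁻ x, ∫⁻ s, ∫⁻ t, G (x, s, t) = 0) : G =ᵐ[volume] 0 := by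
  rw [← lintegral_eq_zero_iff hG, Measure.volume_eq_prod, lintegral_prod _ hG.aemeasurable, ← h]
  refine lintegral_congr fun x => ?_
  rw [Measure.volume_eq_prod, lintegral_prod]
  exact (hG.comp measurable_prodMk_left).aemeasurable

/-- For a strictly positive probability density `g` on `ℝ` and two
processes `X, Y` with continuous paths on `[0,1]` defined on a common probability
space, `d_g(X,Y) = 0` iff `X` and `Y` are independent (the joint law on
`C([0,1],ℝ) × C([0,1],ℝ)` is the product of the marginal laws). -/
theorem distCov_eq_zero_iff_indep
    {Ω : Type*} [MeasurableSpace Ω] (ℙ : Measure Ω) [IsProbabilityMeasure ℙ]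
    [MeasurableSpace C(I, ℝ)] [BorelSpace C(I, ℝ)]
    (X Y : Ω → C(I, ℝ)) (hX : Measurable X) (hY : Measurable Y)
    (g : ℝ → ℝ) (hg : Measurable g) (hg_pos : ∀ s, 0 < g s)
    (hg_int : (∫ s, g s) = 1) :
    distCov ℙ X Y g = 0
      ↔ Measure.map (fun ω => (X ω, Y ω)) ℙ
          = (Measure.map X ℙ).prod (Measure.map Y ℙ) := by
  rw [← indepFun_iff_map_prod_eq_prod_map_map hX.aemeasurable hY.aemeasurable]
  constructor
  · intro h0
    refine indep_lift_aux ℙ X Y hX hY fun k x => indep_of_cf_aux ℙ X Y hX hY x ?_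
    have hk := ENNReal.tsum_eq_zero.1 h0 k
    have hc : ENNReal.ofReal (Real.exp (-1) / (Nat.factorial (k + 1) : ℝ)) ≠ 0 := by
      rw [Ne, ENNReal.ofReal_eq_zero, not_le]
      positivity
    replace hk := (mul_eq_zero.1 hk).resolve_left hc
    have c1 := cont_joint_aux ℙ X Y hX hY (k + 1)
    have c2 : Continuous (fun p : (Fin (k + 1) → I) × (Fin (k + 1) → ℝ) × (Fin (k + 1) → ℝ) =>
        margCF ℙ X p.1 p.2.1) := by
      simp_rw [marg_eq_left_aux ℙ X Y]
      exact c1.comp (f := fun p : (Fin (k + 1) → I) × (Fin (k + 1) → ℝ) × (Fin (k + 1) → ℝ) =>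
         (p.1, p.2.1, 0)) (by fun_prop)
    have c3 : Continuous (fun p : (Fin (k + 1) → I) × (Fin (k + 1) → ℝ) × (Fin (k + 1) → ℝ) =>
        margCF ℙ Y p.1 p.2.2) := by
      simp_rw [marg_eq_left_aux ℙ Y X]
      exact (cont_joint_aux ℙ Y X hY hX (k + 1)).comp (f := fun p : (Fin (k + 1) → I) × (Fin (k + 1) → ℝ) × (Fin (k + 1) → ℝ) =>
         (p.1, p.2.2, 0))
        (by fun_prop)
    have hae := ae_zero_aux (fun p => ENNReal.ofReal
      (‖jointCF ℙ X Y p.1 p.2.1 p.2.2 - margCF ℙ X p.1 p.2.1 * margCF ℙ Y p.1 p.2.2‖ ^ 2 *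
        ∏ j, g (p.2.1 j) * g (p.2.2 j))) (by
          have m1 := c1.measurable
          have m2 := c2.measurable
          have m3 := c3.measurable
          fun_prop) hk
    have hall : (fun p : (Fin (k + 1) → I) × (Fin (k + 1) → ℝ) × (Fin (k + 1) → ℝ) =>
        jointCF ℙ X Y p.1 p.2.1 p.2.2) =
        fun p => margCF ℙ X p.1 p.2.1 * margCF ℙ Y p.1 p.2.2 := by
      haveI i1 : (volume : Measure (Fin (k + 1) → I)).IsOpenPosMeasure :=
        inferInstanceAs (Measure.pi fun _ => volume).IsOpenPosMeasure
      haveI i2 : (volume : Measure (Fin (k + 1) → ℝ)).IsOpenPosMeasure :=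
        inferInstanceAs (Measure.pi fun _ => volume).IsOpenPosMeasure
      haveI i3 : (volume : Measure ((Fin (k + 1) → ℝ) × (Fin (k + 1) → ℝ))).IsOpenPosMeasure :=
        inferInstanceAs (Measure.prod volume volume).IsOpenPosMeasure
      haveI i4 : (volume : Measure ((Fin (k + 1) → I) × (Fin (k + 1) → ℝ) × (Fin (k + 1) → ℝ))).IsOpenPosMeasure :=
        inferInstanceAs (Measure.prod volume volume).IsOpenPosMeasure
      refine (Continuous.ae_eq_iff_eq volume c1 (c2.mul c3)).1 ?_
      filter_upwards [hae] with p hp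
      have hpos : 0 < ∏ j, g (p.2.1 j) * g (p.2.2 j) :=
        Finset.prod_pos fun j _ => mul_pos (hg_pos _) (hg_pos _)
      simp only [Pi.zero_apply, ENNReal.ofReal_eq_zero] at hp
      have h3 := nonpos_of_mul_nonpos_left hp hpos
      have h4 := pow_eq_zero_iff (two_ne_zero) |>.1 (le_antisymm h3 (sq_nonneg _))
      exact sub_eq_zero.1 (norm_eq_zero.1 h4)
    intro s t
    exact congrFun hall (x, s, t)
  · intro hind
    have hz : ∀ (k : ℕ) (x : Fin k → I) (s t : Fin k → ℝ),
        jointCF ℙ X Y x s t = margCF ℙ X x s * margCF ℙ Y x t := by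
      intro k x s t
      have hm : ∀ s : Fin k → ℝ, Measurable (fun f : C(I, ℝ) =>
          Complex.exp (Complex.I * ((∑ j, s j * f (x j) : ℝ) : ℂ))) := by
        intro s
        exact Continuous.measurable (by fun_prop)
      have := (hind.comp (hm s) (hm t)).integral_fun_mul_eq_mul_integral
        ((hm s).comp hX).aestronglyMeasurable ((hm t).comp hY).aestronglyMeasurable
      simp only [Function.comp_apply, ← Complex.exp_add, ← mul_add, ← Complex.ofReal_add,
        ← Finset.sum_add_distrib] at this
      exact this
    simp [distCov, hz]
end

section
/- Let g : ℝ → (0,∞) be a strictly positive probability density and let X and Y be stochastic processes on [0,1] with continuous sample paths (not necessarily on the same probability space). Define d(P_X, P_Y) = Σ_{k=1}^∞ (e^{-1}/k!) ∫_{[0,1]^k} ∫_{ℝ^k} |φ_X(x_k; s_k) − φ_Y(x_k; s_k)|² ∏_{j=1}^k g(s_j) ds_k dx_k. Then d(P_X, P_Y) = 0 if and only if X and Y have the same law on C([0,1],ℝ), i.e., all finite-dimensional distributions of X and Y coincide. -/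
open MeasureTheory
open scoped unitInterval ENNReal

/-- The distance between the laws of the processes `X` and `Y`:
`d(P_X,P_Y) = Σ_{k≥1} (e^{-1}/k!) ∫_{[0,1]^k} ∫_{ℝ^k} |φ_X(x;s) - φ_Y(x;s)|² Π_j g(s_j) ds dx`. -/
noncomputable def distLaw {Ω : Type*} [MeasurableSpace Ω] (ℙ : Measure Ω)
    {Ω' : Type*} [MeasurableSpace Ω'] (ℙ' : Measure Ω')
    (X : Ω → C(I, ℝ)) (Y : Ω' → C(I, ℝ)) (g : ℝ → ℝ) : ℝ≥0∞ :=
  ∑' k : ℕ,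
    ENNReal.ofReal (Real.exp (-1) / (Nat.factorial (k + 1) : ℝ)) *
      ∫⁻ (x : Fin (k + 1) → I),
        ∫⁻ (s : Fin (k + 1) → ℝ),
          ENNReal.ofReal
            (‖margCF ℙ X x s - margCF ℙ' Y x s‖ ^ 2 * ∏ j, g (s j))

/-- Lebesgue measure on the unit interval charges nonempty open sets. -/
lemma aux_openPos : (volume : Measure I).IsOpenPosMeasure := by
  refine ⟨fun U hU hne => ?_⟩
  obtain ⟨V, hV, rfl⟩ := isOpen_induced_iff.1 hU
  obtain ⟨x, hx⟩ := hne
  have hx' : (x : ℝ) ∈ closure (Set.Ioo (0 : ℝ) 1) := by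
    rw [closure_Ioo zero_ne_one]; exact x.2
  have hne' : (V ∩ Set.Ioo (0 : ℝ) 1).Nonempty := mem_closure_iff.1 hx' V hV hx
  have hpos := (hV.inter isOpen_Ioo).measure_pos volume hne'
  have h1 : volume ((Subtype.val : I → ℝ) ⁻¹' V)
      = volume ((Subtype.val : I → ℝ) '' ((Subtype.val : I → ℝ) ⁻¹' V)) :=
    comap_subtype_coe_apply measurableSet_Icc volume _
  rw [h1]
  refine (hpos.trans_le (measure_mono ?_)).ne'
  rintro y ⟨hy, hy'⟩
  exact ⟨⟨y, hy'.1.le, hy'.2.le⟩, hy, rfl⟩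

lemma aux_margCF_map {Ω : Type*} [MeasurableSpace Ω] (ℙ : Measure Ω)
    [MeasurableSpace C(I, ℝ)] [BorelSpace C(I, ℝ)]
    (X : Ω → C(I, ℝ)) (hX : Measurable X) {k : ℕ} (x : Fin k → I) (s : Fin k → ℝ) :
    margCF ℙ X x s
      = ∫ f : C(I, ℝ), Complex.exp (Complex.I * ((∑ j, s j * f (x j) : ℝ) : ℂ)) ∂(ℙ.map X) := by
  rw [integral_map hX.aemeasurable]
  · rfl
  · have : Continuous fun f : C(I, ℝ) =>
        Complex.exp (Complex.I * ((∑ j, s j * f (x j) : ℝ) : ℂ)) := by fun_prop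
    exact this.aestronglyMeasurable

lemma aux_continuous {Ω : Type*} [MeasurableSpace Ω] (ℙ : Measure Ω) [IsProbabilityMeasure ℙ]
    [MeasurableSpace C(I, ℝ)] [BorelSpace C(I, ℝ)]
    (X : Ω → C(I, ℝ)) (hX : Measurable X) (k : ℕ) :
    Continuous fun p : (Fin k → I) × (Fin k → ℝ) => margCF ℙ X p.1 p.2 := by
  unfold margCF
  refine continuous_of_dominated (bound := fun _ => 1) ?_ ?_ (integrable_const _) ?_
  · intro p
    have : Continuous fun f : C(I, ℝ) =>
        Complex.exp (Complex.I * ((∑ j, p.2 j * f (p.1 j) : ℝ) : ℂ)) := by fun_prop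
    exact (this.measurable.comp hX).aestronglyMeasurable
  · intro p
    refine Filter.Eventually.of_forall fun ω => ?_
    rw [mul_comm, Complex.norm_exp_ofReal_mul_I]
  · refine Filter.Eventually.of_forall fun ω => ?_
    fun_prop

lemma aux_law {Ω : Type*} [MeasurableSpace Ω] (ℙ : Measure Ω) [IsProbabilityMeasure ℙ]
    {Ω' : Type*} [MeasurableSpace Ω'] (ℙ' : Measure Ω') [IsProbabilityMeasure ℙ']
    [MeasurableSpace C(I, ℝ)] [BorelSpace C(I, ℝ)]
    (X : Ω → C(I, ℝ)) (Y : Ω' → C(I, ℝ)) (hX : Measurable X) (hY : Measurable Y)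
    (h : ∀ (k : ℕ) (x : Fin k → I) (s : Fin k → ℝ), margCF ℙ X x s = margCF ℙ' Y x s) :
    Measure.map X ℙ = Measure.map Y ℙ' := by
  let q : ℕ → I := TopologicalSpace.denseSeq I
  let e : C(I, ℝ) → (ℕ → ℝ) := fun f n => f (q n)
  have hec : Continuous e := by fun_prop
  have hinj : Function.Injective e := by
    intro f g hfg
    refine DFunLike.coe_injective ?_
    refine Continuous.ext_on (TopologicalSpace.denseRange_denseSeq I) f.continuous g.continuous ?_
    rintro _ ⟨n, rfl⟩
    exact congrFun hfg n
  have hemb : MeasurableEmbedding e := hec.measurableEmbedding hinj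
  have : IsProbabilityMeasure (ℙ.map X) := Measure.isProbabilityMeasure_map hX.aemeasurable
  have : IsProbabilityMeasure (ℙ'.map Y) := Measure.isProbabilityMeasure_map hY.aemeasurable
  suffices hmap : (ℙ.map X).map e = (ℙ'.map Y).map e by
    rw [← hemb.comap_map (ℙ.map X), hmap, hemb.comap_map]
  have key : ∀ J : Finset ℕ,
      ((ℙ.map X).map e).map J.restrict = ((ℙ'.map Y).map e).map J.restrict := by
    intro J
    have hJ : Measurable (J.restrict (π := fun _ : ℕ => ℝ)) := Finset.measurable_restrict J
    rw [Measure.map_map hJ hemb.measurable, Measure.map_map hJ hemb.measurable]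
    have hm := hJ.comp hemb.measurable
    have := Measure.isProbabilityMeasure_map (μ := ℙ.map X) hm.aemeasurable
    have := Measure.isProbabilityMeasure_map (μ := ℙ'.map Y) hm.aemeasurable
    refine Measure.ext_of_charFunDual ?_
    ext L
    rw [charFunDual_apply, charFunDual_apply, integral_map hm.aemeasurable (by fun_prop),
      integral_map hm.aemeasurable (by fun_prop)]
    have hL : ∀ v : J → ℝ, L v = ∑ i, L (Pi.single i 1) * v i := by
      intro v
      conv_lhs => rw [pi_eq_sum_univ' v]
      simp [map_sum, mul_comm, Pi.single_apply]
    have := h J.card (fun j => q (J.equivFin.symm j))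
      (fun j => L (Pi.single (J.equivFin.symm j) 1))
    rw [aux_margCF_map ℙ X hX, aux_margCF_map ℙ' Y hY] at this
    have hs : ∀ f : C(I, ℝ), L ((J.restrict ∘ e) f)
        = ∑ j, L (Pi.single (J.equivFin.symm j) 1) * f (q (J.equivFin.symm j)) := by
      intro f
      rw [hL, ← J.equivFin.symm.sum_comp]
      rfl
    simp_rw [hs, mul_comm _ Complex.I]
    exact this
  have : IsProbabilityMeasure ((ℙ'.map Y).map e) :=
    Measure.isProbabilityMeasure_map hec.aemeasurable
  refine IsProjectiveLimit.unique
    (P := fun J : Finset ℕ => ((ℙ'.map Y).map e).map J.restrict) ?_ (fun J => rfl)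
  exact key

/-- For a strictly positive probability density `g` on `ℝ` and two
processes `X, Y` with continuous sample paths on `[0,1]` (not necessarily on the same
probability space), `d(P_X,P_Y) = 0` iff `X` and `Y` have the same law on `C([0,1],ℝ)`. -/
theorem distLaw_eq_zero_iff_eq_law
    {Ω : Type*} [MeasurableSpace Ω] (ℙ : Measure Ω) [IsProbabilityMeasure ℙ]
    {Ω' : Type*} [MeasurableSpace Ω'] (ℙ' : Measure Ω') [IsProbabilityMeasure ℙ']
    [MeasurableSpace C(I, ℝ)] [BorelSpace C(I, ℝ)]
    (X : Ω → C(I, ℝ)) (Y : Ω' → C(I, ℝ)) (hX : Measurable X) (hY : Measurable Y)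
    (g : ℝ → ℝ) (hg : Measurable g) (hg_pos : ∀ s, 0 < g s)
    (hg_int : (∫ s, g s) = 1) :
    distLaw ℙ ℙ' X Y g = 0 ↔ Measure.map X ℙ = Measure.map Y ℙ' := by
  constructor
  · intro h
    refine aux_law ℙ ℙ' X Y hX hY ?_
    intro k
    rcases k with _ | k
    · intro x s
      simp [margCF]
    have hk := (ENNReal.tsum_eq_zero.1 h) k
    have hc : ENNReal.ofReal (Real.exp (-1) / (Nat.factorial (k + 1) : ℝ)) ≠ 0 := by
      rw [Ne, ENNReal.ofReal_eq_zero, not_le]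
      positivity
    have hk := (mul_eq_zero.1 hk).resolve_left hc
    have hcX := aux_continuous ℙ X hX (k + 1)
    have hcY := aux_continuous ℙ' Y hY (k + 1)
    have hmeas : Measurable fun p : (Fin (k + 1) → I) × (Fin (k + 1) → ℝ) =>
        ENNReal.ofReal (‖margCF ℙ X p.1 p.2 - margCF ℙ' Y p.1 p.2‖ ^ 2 * ∏ j, g (p.2 j)) := by
      refine ENNReal.measurable_ofReal.comp (Measurable.mul ?_ ?_)
      · exact ((hcX.sub hcY).norm.pow 2).measurable
      · fun_prop
    rw [← lintegral_prod _ hmeas.aemeasurable, lintegral_eq_zero_iff hmeas] at hk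
    have := aux_openPos
    have hae : (fun p : (Fin (k + 1) → I) × (Fin (k + 1) → ℝ) => margCF ℙ X p.1 p.2)
        =ᵐ[(volume : Measure (Fin (k + 1) → I)).prod (volume : Measure (Fin (k + 1) → ℝ))]
        fun p => margCF ℙ' Y p.1 p.2 := by
      filter_upwards [hk] with p hp
      have hp' := ENNReal.ofReal_eq_zero.1 hp
      have hpos : 0 < ∏ j, g (p.2 j) := Finset.prod_pos fun j _ => hg_pos _
      by_contra hne
      have : 0 < ‖margCF ℙ X p.1 p.2 - margCF ℙ' Y p.1 p.2‖ := norm_pos_iff.2 (sub_ne_zero.2 hne)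
      exact absurd hp' (not_le.2 (by positivity))
    have : (volume : Measure (Fin (k + 1) → I)).IsOpenPosMeasure := by
      rw [volume_pi]; infer_instance
    have heq := (hcX.ae_eq_iff_eq (μ := (volume : Measure (Fin (k + 1) → I)).prod
      (volume : Measure (Fin (k + 1) → ℝ))) hcY).1 hae
    intro x s
    exact congrFun heq (x, s)
  · intro h
    simp [distLaw, aux_margCF_map ℙ X hX, aux_margCF_map ℙ' Y hY, h]
end

section
/- Let g : ℝ → [0,∞) be a probability density with g(−s) = g(s) for all s ∈ ℝ. Then the distance covariances satisfy the Cauchy–Schwarz-type inequality d_g(X,Y) ≤ √(d_g(X,X) · d_g(Y,Y)). Consequently, if d_g(X,X) > 0 and d_g(Y,Y) > 0, the distance correlation R_g(X,Y) = d_g(X,Y)/√(d_g(X,X) d_g(Y,Y)) satisfies 0 ≤ R_g(X,Y) ≤ 1. -/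
open MeasureTheory
open scoped unitInterval ENNReal

section helpers

open ComplexConjugate

variable {Ω S : Type*} [MeasurableSpace Ω] [MeasurableSpace S]

theorem dc_real_eq (P : Measure Ω) [IsProbabilityMeasure P] (ν : Measure S) [IsFiniteMeasure ν]
    (U V : Ω → S → ℂ) (hU : Measurable (Function.uncurry U)) (hV : Measurable (Function.uncurry V))
    (bU : ∀ ω s, ‖U ω s‖ ≤ 2) (bV : ∀ ω s, ‖V ω s‖ ≤ 2) :
    ((∫ p : S × S, ‖∫ ω, U ω p.1 * V ω p.2 ∂P‖ ^ 2 ∂(ν.prod ν) : ℝ) : ℂ) =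
      ∫ q : Ω × Ω, (∫ s, U q.1 s * conj (U q.2 s) ∂ν) * (∫ s, V q.1 s * conj (V q.2 s) ∂ν)
        ∂(P.prod P) := by
  have h1 : ∀ p : S × S, ((‖∫ ω, U ω p.1 * V ω p.2 ∂P‖ ^ 2 : ℝ) : ℂ) =
      ∫ q : Ω × Ω, (U q.1 p.1 * V q.1 p.2) * conj (U q.2 p.1 * V q.2 p.2) ∂(P.prod P) := by
    intro p
    rw [integral_prod_mul (fun ω => U ω p.1 * V ω p.2) (fun ω => conj (U ω p.1 * V ω p.2)),
      integral_conj, Complex.mul_conj, Complex.normSq_eq_norm_sq]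
  rw [← integral_complex_ofReal]
  simp_rw [h1]
  rw [integral_integral_swap]
  · congr 1
    ext q
    rw [← integral_prod_mul]
    congr 1
    ext p
    simp only [map_mul]
    ring
  · apply Integrable.of_bound (C := 16)
    · apply Measurable.aestronglyMeasurable
      have e1 : Measurable fun z : (S × S) × (Ω × Ω) => U z.2.1 z.1.1 :=
        hU.comp (f := fun z : (S × S) × (Ω × Ω) => (z.2.1, z.1.1)) (by fun_prop)
      have e2 : Measurable fun z : (S × S) × (Ω × Ω) => V z.2.1 z.1.2 :=
        hV.comp (f := fun z : (S × S) × (Ω × Ω) => (z.2.1, z.1.2)) (by fun_prop)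
      have e3 : Measurable fun z : (S × S) × (Ω × Ω) => U z.2.2 z.1.1 :=
        hU.comp (f := fun z : (S × S) × (Ω × Ω) => (z.2.2, z.1.1)) (by fun_prop)
      have e4 : Measurable fun z : (S × S) × (Ω × Ω) => V z.2.2 z.1.2 :=
        hV.comp (f := fun z : (S × S) × (Ω × Ω) => (z.2.2, z.1.2)) (by fun_prop)
      exact (e1.mul e2).mul (Complex.continuous_conj.measurable.comp (e3.mul e4))
    · refine Filter.Eventually.of_forall fun z => ?_
      simp only [Function.uncurry, norm_mul, RCLike.norm_conj]
      have a1 : ‖U z.2.1 z.1.1‖ * ‖V z.2.1 z.1.2‖ ≤ 2 * 2 :=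
        mul_le_mul (bU _ _) (bV _ _) (norm_nonneg _) (by norm_num)
      have a2 : ‖U z.2.2 z.1.1‖ * ‖V z.2.2 z.1.2‖ ≤ 2 * 2 :=
        mul_le_mul (bU _ _) (bV _ _) (norm_nonneg _) (by norm_num)
      have := mul_le_mul a1 a2 (by positivity) (by norm_num)
      linarith

theorem kern_meas (ν : Measure S) [IsFiniteMeasure ν]
    (U : Ω → S → ℂ) (hU : Measurable (Function.uncurry U)) :
    Measurable fun q : Ω × Ω => ∫ s, U q.1 s * conj (U q.2 s) ∂ν := by
  apply StronglyMeasurable.measurable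
  apply StronglyMeasurable.integral_prod_right
    (f := fun (q : Ω × Ω) s => U q.1 s * conj (U q.2 s))
  apply Measurable.stronglyMeasurable
  have e1 : Measurable fun z : (Ω × Ω) × S => U z.1.1 z.2 :=
    hU.comp (f := fun z : (Ω × Ω) × S => (z.1.1, z.2)) (by fun_prop)
  have e2 : Measurable fun z : (Ω × Ω) × S => U z.1.2 z.2 :=
    hU.comp (f := fun z : (Ω × Ω) × S => (z.1.2, z.2)) (by fun_prop)
  exact e1.mul (Complex.continuous_conj.measurable.comp e2)

theorem cov_expand (P : Measure Ω) [IsProbabilityMeasure P] (u v : Ω → ℂ) (a b : ℂ)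
    (iX : Integrable u P) (iY : Integrable v P) (iXY : Integrable (fun ω => u ω * v ω) P)
    (ha : a = ∫ ω, u ω ∂P) (hb : b = ∫ ω, v ω ∂P) :
    ∫ ω, u ω * v ω ∂P - a * b = ∫ ω, (u ω - a) * (v ω - b) ∂P := by
  have h : ∀ ω, (u ω - a) * (v ω - b) = u ω * v ω - (u ω * b + a * v ω) + a * b := by
    intro ω; ring
  simp_rw [h]
  have i1 : Integrable (fun ω => u ω * b + a * v ω) P := (iX.mul_const b).add (iY.const_mul a)
  have i2 : Integrable (fun ω => u ω * v ω - (u ω * b + a * v ω)) P := iXY.sub i1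
  rw [integral_add i2 (integrable_const _), integral_sub iXY i1,
    integral_add (iX.mul_const b) (iY.const_mul a),
    integral_mul_const, integral_const_mul, ← ha, ← hb]
  simp only [integral_const, probReal_univ, one_smul]
  ring

theorem kern_bound {Ω S : Type*} [MeasurableSpace S] (ν : Measure S) [IsFiniteMeasure ν]
    (U : Ω → S → ℂ) (bU : ∀ ω s, ‖U ω s‖ ≤ 2) (q : Ω × Ω) :
    ‖∫ s, U q.1 s * conj (U q.2 s) ∂ν‖ ≤ 4 * ν.real Set.univ := by
  apply norm_integral_le_of_norm_le_const
  refine Filter.Eventually.of_forall fun s => ?_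
  simp only [norm_mul, RCLike.norm_conj]
  have := mul_le_mul (bU q.1 s) (bU q.2 s) (norm_nonneg _) (by norm_num)
  linarith

theorem kern_real (ν : Measure S) [IsFiniteMeasure ν] (τ : S → S) (hτ : MeasurePreserving τ ν ν)
    (U : Ω → S → ℂ) (hU : Measurable (Function.uncurry U))
    (cU : ∀ ω s, U ω (τ s) = conj (U ω s)) (q : Ω × Ω) :
    ∫ s, U q.1 s * conj (U q.2 s) ∂ν = ((∫ s, U q.1 s * conj (U q.2 s) ∂ν).re : ℂ) := by
  symm
  rw [← Complex.conj_eq_iff_re, ← integral_conj]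
  have hm : Measurable fun s => U q.1 s * conj (U q.2 s) :=
    (hU.comp measurable_prodMk_left).mul
      (Complex.continuous_conj.measurable.comp (hU.comp measurable_prodMk_left))
  have h2 : ∫ s, U q.1 s * conj (U q.2 s) ∂ν = ∫ s, U q.1 (τ s) * conj (U q.2 (τ s)) ∂ν := by
    conv_lhs => rw [← hτ.map_eq]
    rw [integral_map hτ.measurable.aemeasurable hm.aestronglyMeasurable]
  rw [h2]
  congr 1
  ext s
  rw [cU, cU, map_mul]

theorem cf_meas (P : Measure Ω) [IsProbabilityMeasure P]
    (U V : Ω → S → ℂ) (hU : Measurable (Function.uncurry U)) (hV : Measurable (Function.uncurry V)) :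
    Measurable fun p : S × S => ∫ ω, U ω p.1 * V ω p.2 ∂P := by
  apply StronglyMeasurable.measurable
  apply StronglyMeasurable.integral_prod_right (f := fun (p : S × S) ω => U ω p.1 * V ω p.2)
  apply Measurable.stronglyMeasurable
  have e1 : Measurable fun z : (S × S) × Ω => U z.2 z.1.1 :=
    hU.comp (f := fun z : (S × S) × Ω => (z.2, z.1.1)) (by fun_prop)
  have e2 : Measurable fun z : (S × S) × Ω => V z.2 z.1.2 :=
    hV.comp (f := fun z : (S × S) × Ω => (z.2, z.1.2)) (by fun_prop)
  exact e1.mul e2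

theorem dc_eq (P : Measure Ω) [IsProbabilityMeasure P] (ν : Measure S) [IsFiniteMeasure ν]
    (τ : S → S) (hτ : MeasurePreserving τ ν ν)
    (U V : Ω → S → ℂ) (hU : Measurable (Function.uncurry U)) (hV : Measurable (Function.uncurry V))
    (bU : ∀ ω s, ‖U ω s‖ ≤ 2) (bV : ∀ ω s, ‖V ω s‖ ≤ 2)
    (cU : ∀ ω s, U ω (τ s) = conj (U ω s)) (cV : ∀ ω s, V ω (τ s) = conj (V ω s)) :
    ∫⁻ s, ∫⁻ t, ENNReal.ofReal (‖∫ ω, U ω s * V ω t ∂P‖ ^ 2) ∂ν ∂ν =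
      ENNReal.ofReal (∫ q : Ω × Ω, (∫ s, U q.1 s * conj (U q.2 s) ∂ν).re *
        (∫ s, V q.1 s * conj (V q.2 s) ∂ν).re ∂(P.prod P)) := by
  have hm := cf_meas P U V hU hV
  have hm2 : Measurable fun p : S × S => ‖∫ ω, U ω p.1 * V ω p.2 ∂P‖ ^ 2 := hm.norm.pow_const 2
  have key : ∫ p : S × S, ‖∫ ω, U ω p.1 * V ω p.2 ∂P‖ ^ 2 ∂(ν.prod ν) =
      ∫ q : Ω × Ω, (∫ s, U q.1 s * conj (U q.2 s) ∂ν).re *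
        (∫ s, V q.1 s * conj (V q.2 s) ∂ν).re ∂(P.prod P) := by
    have := dc_real_eq P ν U V hU hV bU bV
    apply Complex.ofReal_injective
    rw [this, ← integral_complex_ofReal]
    congr 1
    ext q
    rw [kern_real ν τ hτ U hU cU q, kern_real ν τ hτ V hV cV q]
    simp
  rw [← key, ofReal_integral_eq_lintegral_ofReal]
  · rw [lintegral_prod _ hm2.ennreal_ofReal.aemeasurable]
  · apply Integrable.of_bound hm2.aestronglyMeasurable (C := 16)
    refine Filter.Eventually.of_forall fun p => ?_
    have : ‖∫ ω, U ω p.1 * V ω p.2 ∂P‖ ≤ 4 * P.real Set.univ := by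
      apply norm_integral_le_of_norm_le_const
      refine Filter.Eventually.of_forall fun ω => ?_
      rw [norm_mul]
      have := mul_le_mul (bU ω p.1) (bV ω p.2) (norm_nonneg _) (by norm_num)
      linarith
    simp only [probReal_univ, mul_one] at this
    rw [norm_pow, norm_norm]
    nlinarith [norm_nonneg (∫ ω, U ω p.1 * V ω p.2 ∂P)]
  · exact Filter.Eventually.of_forall fun p => by positivity

theorem real_cs {α : Type*} [MeasurableSpace α] (μ : Measure α) [IsFiniteMeasure μ]
    (a b : α → ℝ) (ma : Measurable a) (mb : Measurable b) (C : ℝ)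
    (ba : ∀ q, |a q| ≤ C) (bb : ∀ q, |b q| ≤ C) :
    ENNReal.ofReal (∫ q, a q * b q ∂μ) ≤
      (ENNReal.ofReal (∫ q, a q * a q ∂μ)) ^ (1/2 : ℝ) *
      (ENNReal.ofReal (∫ q, b q * b q ∂μ)) ^ (1/2 : ℝ) := by
  have int : ∀ a b : α → ℝ, Measurable a → Measurable b → (∀ q, |a q| ≤ C) → (∀ q, |b q| ≤ C) →
      Integrable (fun q => a q * b q) μ := by
    intro a b ma mb ba bb
    apply Integrable.of_bound (ma.mul mb).aestronglyMeasurable (C := C * C)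
    refine Filter.Eventually.of_forall fun q => ?_
    rw [Real.norm_eq_abs, Pi.mul_apply, abs_mul]
    exact mul_le_mul (ba q) (bb q) (abs_nonneg _) ((abs_nonneg _).trans (ba q))
  rw [ofReal_integral_eq_lintegral_ofReal (int a a ma ma ba ba)
      (Filter.Eventually.of_forall fun q => mul_self_nonneg _),
    ofReal_integral_eq_lintegral_ofReal (int b b mb mb bb bb)
      (Filter.Eventually.of_forall fun q => mul_self_nonneg _)]
  refine le_trans ?_ (ENNReal.lintegral_mul_norm_pow_le
    (ma.mul ma).ennreal_ofReal.aemeasurable (mb.mul mb).ennreal_ofReal.aemeasurable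
    (by norm_num) (by norm_num) (by norm_num))
  have h1 : ∫ q, a q * b q ∂μ ≤ ∫ q, |a q| * |b q| ∂μ := by
    apply integral_mono (int a b ma mb ba bb)
      (int _ _ ma.abs mb.abs (by simpa using ba) (by simpa using bb))
    intro q
    simp only [← abs_mul]
    exact le_abs_self _
  refine (ENNReal.ofReal_le_ofReal h1).trans ?_
  rw [ofReal_integral_eq_lintegral_ofReal
    (int (fun q => |a q|) (fun q => |b q|) ma.abs mb.abs (by simpa using ba) (by simpa using bb))
      (Filter.Eventually.of_forall fun q => by positivity)]
  apply lintegral_mono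
  intro q
  have sq : ∀ c : ℝ, ENNReal.ofReal (c * c) ^ (1/2 : ℝ) = ENNReal.ofReal |c| := by
    intro c
    rw [ENNReal.ofReal_rpow_of_nonneg (mul_self_nonneg c) (by norm_num), ← Real.sqrt_eq_rpow,
      Real.sqrt_mul_self_eq_abs]
  simp only [Pi.mul_apply, sq]
  rw [ENNReal.ofReal_mul (abs_nonneg _)]

theorem dc_cs (P : Measure Ω) [IsProbabilityMeasure P] (ν : Measure S) [IsFiniteMeasure ν]
    (τ : S → S) (hτ : MeasurePreserving τ ν ν)
    (U V : Ω → S → ℂ) (hU : Measurable (Function.uncurry U)) (hV : Measurable (Function.uncurry V))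
    (bU : ∀ ω s, ‖U ω s‖ ≤ 2) (bV : ∀ ω s, ‖V ω s‖ ≤ 2)
    (cU : ∀ ω s, U ω (τ s) = conj (U ω s)) (cV : ∀ ω s, V ω (τ s) = conj (V ω s)) :
    ∫⁻ s, ∫⁻ t, ENNReal.ofReal (‖∫ ω, U ω s * V ω t ∂P‖ ^ 2) ∂ν ∂ν ≤
      (∫⁻ s, ∫⁻ t, ENNReal.ofReal (‖∫ ω, U ω s * U ω t ∂P‖ ^ 2) ∂ν ∂ν) ^ (1/2 : ℝ) *
      (∫⁻ s, ∫⁻ t, ENNReal.ofReal (‖∫ ω, V ω s * V ω t ∂P‖ ^ 2) ∂ν ∂ν) ^ (1/2 : ℝ) := by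
  rw [dc_eq P ν τ hτ U V hU hV bU bV cU cV, dc_eq P ν τ hτ U U hU hU bU bU cU cU,
    dc_eq P ν τ hτ V V hV hV bV bV cV cV]
  have mk : ∀ W : Ω → S → ℂ, Measurable (Function.uncurry W) →
      Measurable fun q : Ω × Ω => (∫ s, W q.1 s * conj (W q.2 s) ∂ν).re := fun W hW =>
    Complex.measurable_re.comp (kern_meas ν W hW)
  have bk : ∀ W : Ω → S → ℂ, (∀ ω s, ‖W ω s‖ ≤ 2) → ∀ q : Ω × Ω,
      |(∫ s, W q.1 s * conj (W q.2 s) ∂ν).re| ≤ 4 * ν.real Set.univ := fun W hW q =>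
    (Complex.abs_re_le_norm _).trans (kern_bound ν W hW q)
  exact real_cs (P.prod P) _ _ (mk U hU) (mk V hV) _ (bk U bU) (bk V bV)

theorem dens_lemma (μ : Measure S) [SFinite μ] (w : S → ℝ≥0∞) (hw : Measurable w)
    (hwt : ∀ s, w s ≠ ∞) (D : S → S → ℝ≥0∞) (hD : Measurable (Function.uncurry D)) :
    ∫⁻ s, ∫⁻ t, D s t ∂(μ.withDensity w) ∂(μ.withDensity w) =
      ∫⁻ s, ∫⁻ t, w s * (w t * D s t) ∂μ ∂μ := by
  have h1 : ∀ s, ∫⁻ t, D s t ∂(μ.withDensity w) = ∫⁻ t, w t * D s t ∂μ := fun s =>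
    lintegral_withDensity_eq_lintegral_mul μ hw (hD.comp measurable_prodMk_left)
  simp_rw [h1]
  have hm2 : Measurable fun s => ∫⁻ t, w t * D s t ∂μ :=
    Measurable.lintegral_prod_right' (f := fun p : S × S => w p.2 * D p.1 p.2)
      ((hw.comp measurable_snd).mul hD)
  rw [lintegral_withDensity_eq_lintegral_mul μ hw hm2]
  apply lintegral_congr
  intro s
  rw [lintegral_const_mul' _ _ (hwt s)]
  rfl

end helpers

section process

open ComplexConjugate

variable {Ω : Type*} [MeasurableSpace Ω]

/-- The centered complex exponential. -/
noncomputable def cent (ℙ : Measure Ω) (X : Ω → C(I, ℝ)) {k : ℕ} (x : Fin k → I)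
    (ω : Ω) (s : Fin k → ℝ) : ℂ :=
  Complex.exp (Complex.I * ((∑ j, s j * X ω (x j) : ℝ) : ℂ)) - margCF ℙ X x s

theorem norm_cexp_I (r : ℝ) : ‖Complex.exp (Complex.I * (r : ℂ))‖ = 1 := by
  rw [mul_comm]; exact Complex.norm_exp_ofReal_mul_I r

theorem conj_cexp_I (r : ℝ) :
    conj (Complex.exp (Complex.I * (r : ℂ))) = Complex.exp (Complex.I * ((-r : ℝ) : ℂ)) := by
  rw [← Complex.exp_conj]
  simp

theorem margCF_bound (ℙ : Measure Ω) [IsProbabilityMeasure ℙ] (X : Ω → C(I, ℝ)) {k : ℕ}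
    (x : Fin k → I) (s : Fin k → ℝ) : ‖margCF ℙ X x s‖ ≤ 1 := by
  have := norm_integral_le_of_norm_le_const (μ := ℙ) (C := 1)
    (f := fun ω => Complex.exp (Complex.I * ((∑ j, s j * X ω (x j) : ℝ) : ℂ)))
    (Filter.Eventually.of_forall fun ω => (norm_cexp_I _).le)
  simpa [margCF] using this

theorem cent_bound (ℙ : Measure Ω) [IsProbabilityMeasure ℙ] (X : Ω → C(I, ℝ)) {k : ℕ}
    (x : Fin k → I) (ω : Ω) (s : Fin k → ℝ) : ‖cent ℙ X x ω s‖ ≤ 2 := by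
  have h1 := norm_cexp_I (∑ j, s j * X ω (x j))
  have h2 := margCF_bound ℙ X x s
  have h3 := norm_sub_le (Complex.exp (Complex.I * ((∑ j, s j * X ω (x j) : ℝ) : ℂ)))
    (margCF ℙ X x s)
  unfold cent
  linarith

theorem cent_conj (ℙ : Measure Ω) (X : Ω → C(I, ℝ)) {k : ℕ}
    (x : Fin k → I) (ω : Ω) (s : Fin k → ℝ) : cent ℙ X x ω (-s) = conj (cent ℙ X x ω s) := by
  have h : ∀ ω, Complex.exp (Complex.I * ((∑ j, (-s) j * X ω (x j) : ℝ) : ℂ)) =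
      conj (Complex.exp (Complex.I * ((∑ j, s j * X ω (x j) : ℝ) : ℂ))) := by
    intro ω
    rw [conj_cexp_I]
    simp [Finset.sum_neg_distrib]
  unfold cent margCF
  rw [map_sub, ← integral_conj, h ω]
  simp_rw [h]

variable [MeasurableSpace C(I, ℝ)] [BorelSpace C(I, ℝ)]

theorem eval_meas {α : Type*} [MeasurableSpace α] (X : Ω → C(I, ℝ)) (hX : Measurable X)
    (f : α → Ω) (hf : Measurable f) (y : α → I) (hy : Measurable y) :
    Measurable fun a => X (f a) (y a) := by
  have : Measurable fun p : C(I, ℝ) × I => p.1 p.2 := continuous_eval.measurable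
  exact this.comp ((hX.comp hf).prodMk hy)

theorem exp_meas {α : Type*} [MeasurableSpace α] (X : Ω → C(I, ℝ)) (hX : Measurable X) {k : ℕ}
    (f : α → Ω) (hf : Measurable f) (x : α → Fin k → I) (hx : Measurable x)
    (s : α → Fin k → ℝ) (hs : Measurable s) :
    Measurable fun a =>
      Complex.exp (Complex.I * ((∑ j, s a j * X (f a) (x a j) : ℝ) : ℂ)) := by
  have : ∀ j, Measurable fun a => X (f a) (x a j) := fun j =>
    eval_meas X hX f hf _ (by fun_prop)
  have h2 : Measurable fun a => ∑ j, s a j * X (f a) (x a j) :=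
    Finset.measurable_sum _ fun j _ => ((measurable_pi_apply j).comp hs).mul (this j)
  exact Complex.measurable_exp.comp ((Complex.measurable_ofReal.comp h2).const_mul _)

theorem margCF_meas {α : Type*} [MeasurableSpace α] (ℙ : Measure Ω) [IsProbabilityMeasure ℙ]
    (X : Ω → C(I, ℝ)) (hX : Measurable X) {k : ℕ}
    (x : α → Fin k → I) (hx : Measurable x) (s : α → Fin k → ℝ) (hs : Measurable s) :
    Measurable fun a => margCF ℙ X (x a) (s a) := by
  apply StronglyMeasurable.measurable
  apply StronglyMeasurable.integral_prod_right
    (f := fun a ω => Complex.exp (Complex.I * ((∑ j, s a j * X ω (x a j) : ℝ) : ℂ)))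
  apply Measurable.stronglyMeasurable
  exact exp_meas (α := α × Ω) X hX Prod.snd measurable_snd (fun z => x z.1) (by fun_prop)
    (fun z => s z.1) (by fun_prop)

theorem cent_meas {α : Type*} [MeasurableSpace α] (ℙ : Measure Ω) [IsProbabilityMeasure ℙ]
    (X : Ω → C(I, ℝ)) (hX : Measurable X) {k : ℕ} (f : α → Ω) (hf : Measurable f)
    (x : α → Fin k → I) (hx : Measurable x) (s : α → Fin k → ℝ) (hs : Measurable s) :
    Measurable fun a => cent ℙ X (x a) (f a) (s a) :=
  (exp_meas X hX f hf x hx s hs).sub (margCF_meas ℙ X hX x hx s hs)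

theorem joint_eq (ℙ : Measure Ω) [IsProbabilityMeasure ℙ]
    (X Y : Ω → C(I, ℝ)) (hX : Measurable X) (hY : Measurable Y) {k : ℕ}
    (x : Fin k → I) (s t : Fin k → ℝ) :
    jointCF ℙ X Y x s t - margCF ℙ X x s * margCF ℙ Y x t =
      ∫ ω, cent ℙ X x ω s * cent ℙ Y x ω t ∂ℙ := by
  have mX := exp_meas X hX id measurable_id (fun _ => x) measurable_const (fun _ => s)
    measurable_const
  have mY := exp_meas Y hY id measurable_id (fun _ => x) measurable_const (fun _ => t)
    measurable_const
  simp only [id] at mX mY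
  unfold cent
  set a := margCF ℙ X x s with ha
  set b := margCF ℙ Y x t with hb
  unfold margCF at ha hb
  have hj : jointCF ℙ X Y x s t = ∫ ω,
      Complex.exp (Complex.I * ((∑ j, s j * X ω (x j) : ℝ) : ℂ)) *
      Complex.exp (Complex.I * ((∑ j, t j * Y ω (x j) : ℝ) : ℂ)) ∂ℙ := by
    unfold jointCF
    congr 1
    ext ω
    rw [← Complex.exp_add, ← mul_add, ← Complex.ofReal_add, Finset.sum_add_distrib]
  rw [hj]
  have iX : Integrable (fun ω => Complex.exp (Complex.I * ((∑ j, s j * X ω (x j) : ℝ) : ℂ))) ℙ :=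
    Integrable.of_bound mX.aestronglyMeasurable (C := 1)
      (Filter.Eventually.of_forall fun ω => (norm_cexp_I _).le)
  have iY : Integrable (fun ω => Complex.exp (Complex.I * ((∑ j, t j * Y ω (x j) : ℝ) : ℂ))) ℙ :=
    Integrable.of_bound mY.aestronglyMeasurable (C := 1)
      (Filter.Eventually.of_forall fun ω => (norm_cexp_I _).le)
  have iXY : Integrable (fun ω => Complex.exp (Complex.I * ((∑ j, s j * X ω (x j) : ℝ) : ℂ)) *
      Complex.exp (Complex.I * ((∑ j, t j * Y ω (x j) : ℝ) : ℂ))) ℙ :=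
    Integrable.of_bound (mX.mul mY).aestronglyMeasurable (C := 1)
      (Filter.Eventually.of_forall fun ω => by rw [norm_mul, norm_cexp_I, norm_cexp_I, one_mul])
  exact cov_expand ℙ _ _ a b iX iY iXY ha hb

/-- The inner double integral. -/
noncomputable def innerD (ℙ : Measure Ω) (X Y : Ω → C(I, ℝ)) (g : ℝ → ℝ) {k : ℕ}
    (x : Fin k → I) : ℝ≥0∞ :=
  ∫⁻ (s : Fin k → ℝ), ∫⁻ (t : Fin k → ℝ),
          ENNReal.ofReal
            (‖jointCF ℙ X Y x s t - margCF ℙ X x s * margCF ℙ Y x t‖ ^ 2 *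
              ∏ j, g (s j) * g (t j))

theorem diff_meas {α : Type*} [MeasurableSpace α] (ℙ : Measure Ω) [IsProbabilityMeasure ℙ]
    (X Y : Ω → C(I, ℝ)) (hX : Measurable X) (hY : Measurable Y) {k : ℕ}
    (x : α → Fin k → I) (hx : Measurable x) (s : α → Fin k → ℝ) (hs : Measurable s)
    (t : α → Fin k → ℝ) (ht : Measurable t) :
    Measurable fun a => ‖jointCF ℙ X Y (x a) (s a) (t a) -
      margCF ℙ X (x a) (s a) * margCF ℙ Y (x a) (t a)‖ ^ 2 := by
  simp_rw [joint_eq ℙ X Y hX hY]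
  refine Measurable.pow_const (Measurable.norm ?_) 2
  apply StronglyMeasurable.measurable
  apply StronglyMeasurable.integral_prod_right
    (f := fun a ω => cent ℙ X (x a) ω (s a) * cent ℙ Y (x a) ω (t a))
  apply Measurable.stronglyMeasurable
  exact (cent_meas (α := α × Ω) ℙ X hX Prod.snd measurable_snd (fun z => x z.1) (by fun_prop)
    (fun z => s z.1) (by fun_prop)).mul
    (cent_meas (α := α × Ω) ℙ Y hY Prod.snd measurable_snd (fun z => x z.1) (by fun_prop)
    (fun z => t z.1) (by fun_prop))

theorem innerD_meas (ℙ : Measure Ω) [IsProbabilityMeasure ℙ]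
    (X Y : Ω → C(I, ℝ)) (hX : Measurable X) (hY : Measurable Y)
    (g : ℝ → ℝ) (hg : Measurable g) {k : ℕ} :
    Measurable fun x : Fin k → I => innerD ℙ X Y g x := by
  unfold innerD
  apply Measurable.lintegral_prod_right' (f := fun z : (Fin k → I) × (Fin k → ℝ) =>
    ∫⁻ t : Fin k → ℝ, ENNReal.ofReal
            (‖jointCF ℙ X Y z.1 z.2 t - margCF ℙ X z.1 z.2 * margCF ℙ Y z.1 t‖ ^ 2 *
              ∏ j, g (z.2 j) * g (t j)))
  apply Measurable.lintegral_prod_right' (f := fun z : ((Fin k → I) × (Fin k → ℝ)) × (Fin k → ℝ) =>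
    ENNReal.ofReal
            (‖jointCF ℙ X Y z.1.1 z.1.2 z.2 - margCF ℙ X z.1.1 z.1.2 * margCF ℙ Y z.1.1 z.2‖ ^ 2 *
              ∏ j, g (z.1.2 j) * g (z.2 j)))
  apply Measurable.ennreal_ofReal
  exact (diff_meas ℙ X Y hX hY _ (by fun_prop) _ (by fun_prop) _ (by fun_prop)).mul
    (by fun_prop)

theorem innerD_eq (ℙ : Measure Ω) [IsProbabilityMeasure ℙ]
    (X Y : Ω → C(I, ℝ)) (hX : Measurable X) (hY : Measurable Y)
    (g : ℝ → ℝ) (hg : Measurable g) (hg_nonneg : ∀ s, 0 ≤ g s) {k : ℕ} (x : Fin k → I) :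
    innerD ℙ X Y g x =
      ∫⁻ s, ∫⁻ t, ENNReal.ofReal (‖∫ ω, cent ℙ X x ω s * cent ℙ Y x ω t ∂ℙ‖ ^ 2)
        ∂(volume.withDensity fun t : Fin k → ℝ => ENNReal.ofReal (∏ j, g (t j)))
        ∂(volume.withDensity fun t : Fin k → ℝ => ENNReal.ofReal (∏ j, g (t j))) := by
  have hw : Measurable fun t : Fin k → ℝ => ENNReal.ofReal (∏ j, g (t j)) := by fun_prop
  have hwn : ∀ t : Fin k → ℝ, 0 ≤ ∏ j, g (t j) := fun t =>
    Finset.prod_nonneg fun j _ => hg_nonneg _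
  have hD : Measurable fun p : (Fin k → ℝ) × (Fin k → ℝ) =>
      ENNReal.ofReal (‖∫ ω, cent ℙ X x ω p.1 * cent ℙ Y x ω p.2 ∂ℙ‖ ^ 2) := by
    simp_rw [← joint_eq ℙ X Y hX hY]
    exact (diff_meas ℙ X Y hX hY (fun _ => x) (by fun_prop) _ (by fun_prop) _
      (by fun_prop)).ennreal_ofReal
  rw [dens_lemma volume _ hw (fun _ => ENNReal.ofReal_ne_top)
    (fun s t => ENNReal.ofReal (‖∫ ω, cent ℙ X x ω s * cent ℙ Y x ω t ∂ℙ‖ ^ 2)) hD]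
  unfold innerD
  refine lintegral_congr fun s => lintegral_congr fun t => ?_
  rw [joint_eq ℙ X Y hX hY, Finset.prod_mul_distrib, mul_comm, mul_assoc,
    ENNReal.ofReal_mul (hwn s), ENNReal.ofReal_mul (hwn t)]

theorem innerD_cs (ℙ : Measure Ω) [IsProbabilityMeasure ℙ]
    (X Y : Ω → C(I, ℝ)) (hX : Measurable X) (hY : Measurable Y)
    (g : ℝ → ℝ) (hg : Measurable g) (hg_nonneg : ∀ s, 0 ≤ g s)
    (hg_int : (∫ s, g s) = 1) (hg_symm : ∀ s, g (-s) = g s) {k : ℕ} (x : Fin k → I) :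
    innerD ℙ X Y g x ≤ innerD ℙ X X g x ^ (1/2 : ℝ) * innerD ℙ Y Y g x ^ (1/2 : ℝ) := by
  rw [innerD_eq ℙ X Y hX hY g hg hg_nonneg, innerD_eq ℙ X X hX hX g hg hg_nonneg,
    innerD_eq ℙ Y Y hY hY g hg hg_nonneg]
  have hgi : Integrable g := by
    by_contra h
    rw [integral_undef h] at hg_int
    exact zero_ne_one hg_int
  have hwi : Integrable (fun t : Fin k → ℝ => ∏ j, g (t j)) :=
    Integrable.fintype_prod (f := fun _ => g) (fun _ => hgi)
  have hw : Measurable fun t : Fin k → ℝ => ENNReal.ofReal (∏ j, g (t j)) := by fun_prop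
  have : IsFiniteMeasure (volume.withDensity
      fun t : Fin k → ℝ => ENNReal.ofReal (∏ j, g (t j))) :=
    isFiniteMeasure_withDensity_ofReal hwi.2
  have hτ : MeasurePreserving (fun t : Fin k → ℝ => -t)
      (volume.withDensity fun t : Fin k → ℝ => ENNReal.ofReal (∏ j, g (t j)))
      (volume.withDensity fun t : Fin k → ℝ => ENNReal.ofReal (∏ j, g (t j))) := by
    refine ⟨measurable_neg, ?_⟩
    ext A hA
    rw [Measure.map_apply measurable_neg hA, withDensity_apply _ hA,
      withDensity_apply _ (measurable_neg hA)]
    have h := (Measure.measurePreserving_neg (volume : Measure (Fin k → ℝ))).setLIntegral_comp_preimage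
      hA hw
    rw [← h]
    simp [hg_symm]
  exact dc_cs ℙ _ (fun t => -t) hτ (cent ℙ X x) (cent ℙ Y x)
    (cent_meas (α := Ω × (Fin k → ℝ)) ℙ X hX Prod.fst measurable_fst (fun _ => x)
      measurable_const Prod.snd measurable_snd)
    (cent_meas (α := Ω × (Fin k → ℝ)) ℙ Y hY Prod.fst measurable_fst (fun _ => x)
      measurable_const Prod.snd measurable_snd)
    (cent_bound ℙ X x) (cent_bound ℙ Y x) (cent_conj ℙ X x) (cent_conj ℙ Y x)

theorem distCov_cs (ℙ : Measure Ω) [IsProbabilityMeasure ℙ]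
    (X Y : Ω → C(I, ℝ)) (hX : Measurable X) (hY : Measurable Y)
    (g : ℝ → ℝ) (hg : Measurable g) (hg_nonneg : ∀ s, 0 ≤ g s)
    (hg_int : (∫ s, g s) = 1) (hg_symm : ∀ s, g (-s) = g s) :
    distCov ℙ X Y g ≤ (distCov ℙ X X g * distCov ℙ Y Y g) ^ (1/2 : ℝ) := by
  have hd : ∀ X Y : Ω → C(I, ℝ), distCov ℙ X Y g = ∫⁻ k : ℕ,
      (ENNReal.ofReal (Real.exp (-1) / (Nat.factorial (k + 1) : ℝ)) *
        ∫⁻ x : Fin (k + 1) → I, innerD ℙ X Y g x) ∂Measure.count := by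
    intro X Y
    rw [lintegral_count]
    rfl
  rw [hd, hd, hd, ENNReal.mul_rpow_of_nonneg _ _ (by norm_num)]
  refine le_trans ?_ (ENNReal.lintegral_mul_norm_pow_le (Measurable.of_discrete).aemeasurable
    (Measurable.of_discrete).aemeasurable (by norm_num) (by norm_num) (by norm_num))
  apply lintegral_mono
  intro k
  simp only
  generalize ENNReal.ofReal (Real.exp (-1) / (Nat.factorial (k + 1) : ℝ)) = c
  have h1 : ∫⁻ x : Fin (k + 1) → I, innerD ℙ X Y g x ≤
      (∫⁻ x : Fin (k + 1) → I, innerD ℙ X X g x) ^ (1/2 : ℝ) *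
      (∫⁻ x : Fin (k + 1) → I, innerD ℙ Y Y g x) ^ (1/2 : ℝ) :=
    (lintegral_mono fun x =>
      innerD_cs ℙ X Y hX hY g hg hg_nonneg hg_int hg_symm x).trans
    (ENNReal.lintegral_mul_norm_pow_le (innerD_meas ℙ X X hX hX g hg).aemeasurable
      (innerD_meas ℙ Y Y hY hY g hg).aemeasurable (by norm_num) (by norm_num) (by norm_num))
  rw [ENNReal.mul_rpow_of_nonneg _ _ (by norm_num), ENNReal.mul_rpow_of_nonneg _ _ (by norm_num),
    mul_mul_mul_comm, ← ENNReal.rpow_add_of_nonneg _ _ (by norm_num) (by norm_num)]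
  rw [add_halves, ENNReal.rpow_one]
  exact mul_le_mul_right h1 c

end process

/-- For a symmetric probability density `g` on `ℝ`, the distance
covariance satisfies the Cauchy–Schwarz-type inequality
`d_g(X,Y) ≤ √(d_g(X,X) d_g(Y,Y))`; consequently the distance correlation
`R_g(X,Y) = d_g(X,Y)/√(d_g(X,X) d_g(Y,Y))` lies in `[0,1]` whenever
`d_g(X,X) > 0` and `d_g(Y,Y) > 0`. (Nonnegativity is automatic in `ℝ≥0∞`.) -/
theorem distCov_cauchySchwarz
    {Ω : Type*} [MeasurableSpace Ω] (ℙ : Measure Ω) [IsProbabilityMeasure ℙ]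
    [MeasurableSpace C(I, ℝ)] [BorelSpace C(I, ℝ)]
    (X Y : Ω → C(I, ℝ)) (hX : Measurable X) (hY : Measurable Y)
    (g : ℝ → ℝ) (hg : Measurable g) (hg_nonneg : ∀ s, 0 ≤ g s)
    (hg_int : (∫ s, g s) = 1) (hg_symm : ∀ s, g (-s) = g s) :
    distCov ℙ X Y g ≤ (distCov ℙ X X g * distCov ℙ Y Y g) ^ (1/2 : ℝ) ∧
      (0 < distCov ℙ X X g → 0 < distCov ℙ Y Y g →
        distCov ℙ X Y g / (distCov ℙ X X g * distCov ℙ Y Y g) ^ (1/2 : ℝ) ≤ 1) := by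
  have h := distCov_cs ℙ X Y hX hY g hg hg_nonneg hg_int hg_symm
  exact ⟨h, fun _ _ => ENNReal.div_le_of_le_mul (by rwa [one_mul])⟩
end
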